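/- arXiv:1903.06114 — 3 statements merged into one kernel-verified Lean document; each statement's English description precedes it below -/
import Mathlib

section
/- Let p ≥ 1 and let m ≥ 1 be an odd integer. Let L be the language over the alphabet {0,…,2^p−1} consisting of all words w (leading zeros allowed) such that val_{2^p}(w) ∈ m·T, where T is the Thue–Morse set. Then the set of left quotients {w⁻¹L : w a word over {0,…,2^p−1}} has exactly 2m elements; that is, the state complexity of m·T with respect to the base 2^p equals 2m. -/
/-!
The parity of the binary digit sum can be replaced by any surjective strongly `b`-additive function
`s`, with `m` coprime to `b`. After a word of value `m * q + r` with `r < m` has been read,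
membership of the whole word depends only on the carry `r` and on `s q`: a continuation of length
`k` and value `v` completes it to `m * (b ^ k * q + t)` exactly when `b ^ k * r + v = m * t`; then
`t < b ^ k`, and strong additivity gives `s (b ^ k * q + t) = s q + s t`. The languages of the pairs
`(r, s q)` are nonempty and pairwise disjoint: as `b` is invertible modulo `m`, a single
continuation determines `r`, then `t`, and hence `s q`. So there are as many left quotients as
pairs.
-/

/-- The parity (in `ZMod 2`) of the number of 1s in the binary expansion of `n`. -/
def sTM (n : ℕ) : ZMod 2 := ((Nat.digits 2 n).count 1 : ZMod 2)

/-- The Thue–Morse set: natural numbers with an even number of 1s in base 2. -/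
def ThueMorse : Set ℕ := {n | sTM n = 0}

/-- The value of a word over `{0,…,b-1}` (most significant digit first) in base `b`. -/
def valb (b : ℕ) (w : List (Fin b)) : ℕ := w.foldl (fun a d => b * a + d.val) 0

/-- The left quotient of a language by a word. -/
def leftQuot {α : Type*} (L : Set (List α)) (w : List α) : Set (List α) := {u | w ++ u ∈ L}

theorem valb_append_singleton (b : ℕ) (w : List (Fin b)) (d : Fin b) :
    valb b (w ++ [d]) = b * valb b w + d := by
  simp [valb]

theorem valb_append (b : ℕ) (w u : List (Fin b)) :
    valb b (w ++ u) = b ^ u.length * valb b w + valb b u := by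
  induction u using List.reverseRecOn with
  | nil => simp [valb]
  | append_singleton u d ih =>
    rw [← List.append_assoc, valb_append_singleton, valb_append_singleton, ih,
      List.length_append, List.length_singleton]
    ring

theorem valb_lt_pow_length (b : ℕ) (u : List (Fin b)) : valb b u < b ^ u.length := by
  induction u using List.reverseRecOn with
  | nil => simp [valb]
  | append_singleton u d ih =>
    rw [valb_append_singleton, List.length_append, List.length_singleton, pow_succ']
    calc b * valb b u + d < b * (valb b u + 1) := by rw [mul_add_one]; gcongr; exact d.isLt
      _ ≤ b * b ^ u.length := by gcongr; exact ih

theorem exists_length_eq_and_valb_eq {b l e : ℕ} (he : e < b ^ l) :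
    ∃ u : List (Fin b), u.length = l ∧ valb b u = e := by
  induction l generalizing e with
  | zero => exact ⟨[], rfl, by simpa [valb, eq_comm] using he⟩
  | succ l ih =>
    have hb : 0 < b := Nat.pos_of_ne_zero (by rintro rfl; simp at he)
    obtain ⟨u, hu, hv⟩ := ih (Nat.div_lt_of_lt_mul (pow_succ' b l ▸ he))
    refine ⟨u ++ [⟨e % b, Nat.mod_lt e hb⟩], by simp [hu], ?_⟩
    rw [valb_append_singleton, hv, Nat.div_add_mod]

theorem valb_surjective {b : ℕ} (hb : 1 < b) : Function.Surjective (valb b) := fun e =>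
  let ⟨w, _, hw⟩ := exists_length_eq_and_valb_eq (Nat.lt_pow_self (n := e) hb)
  ⟨w, hw⟩

/-- Strongly `b`-additive functions, such as the sum of base-`b` digits: the value at `n` is the
sum of the values at the base-`b` digits of `n`. The values need not commute, and the
summands are then ordered from the most significant digit on. -/
def IsStronglyAdditive {G : Type*} [Add G] (b : ℕ) (s : ℕ → G) : Prop :=
  ∀ q d, d < b → s (b * q + d) = s q + s d

namespace IsStronglyAdditive

variable {G : Type*} [AddLeftCancelMonoid G] {b : ℕ} {s : ℕ → G}

theorem map_zero (hs : IsStronglyAdditive b s) (hb : 0 < b) : s 0 = 0 := by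
  simpa using hs 0 0 hb

protected theorem pow (hs : IsStronglyAdditive b s) (hb : 0 < b) (k : ℕ) :
    IsStronglyAdditive (b ^ k) s := by
  induction k with
  | zero =>
    intro q d hd
    obtain rfl : d = 0 := by simpa using hd
    simp [hs.map_zero hb]
  | succ k ih =>
    intro q d hd
    have hdiv : d / b < b ^ k := Nat.div_lt_of_lt_mul (pow_succ' b k ▸ hd)
    have hmod : d % b < b := Nat.mod_lt d hb
    calc s (b ^ (k + 1) * q + d)
      _ = s (b * (b ^ k * q + d / b) + d % b) := by
        congr 1
        rw [mul_add, add_assoc, Nat.div_add_mod, pow_succ', mul_assoc]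
      _ = s q + (s (d / b) + s (d % b)) := by rw [hs _ _ hmod, ih _ _ hdiv, add_assoc]
      _ = s q + s d := by rw [← hs _ _ hmod, Nat.div_add_mod]

end IsStronglyAdditive

theorem sTM_isStronglyAdditive : IsStronglyAdditive 2 sTM := by
  intro q d hd
  by_cases h : d ≠ 0 ∨ q ≠ 0
  · have hdigits : Nat.digits 2 (2 * q + d) = d :: Nat.digits 2 q := by
      rw [add_comm, Nat.digits_add 2 one_lt_two d q hd h]
    rw [sTM, hdigits]
    interval_cases d <;> simp [sTM]
  · obtain ⟨rfl, rfl⟩ : d = 0 ∧ q = 0 := by simpa using h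
    simp [sTM]

theorem sTM_surjective : Function.Surjective sTM :=
  Fin.forall_fin_two.mpr ⟨⟨0, show sTM 0 = 0 by simp [sTM]⟩, ⟨1, show sTM 1 = 1 by simp [sTM]⟩⟩

/-- The language of the state `(r, a)` of the automaton that divides by `m` in base `b`: the words
which, read after the carry `r`, yield a multiple of `m` whose quotient `t` satisfies `s t = a`. -/
def carryLanguage {G : Type*} (s : ℕ → G) (b m r : ℕ) (a : G) : Set (List (Fin b)) :=
  {u | ∃ t, s t = a ∧ b ^ u.length * r + valb b u = m * t}

theorem carryLanguage_zero {G : Type*} (s : ℕ → G) (b m : ℕ) (a : G) :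
    carryLanguage s b m 0 a = {w | ∃ t, s t = a ∧ valb b w = m * t} := by
  simp [carryLanguage]

theorem eq_of_mem_carryLanguage {G : Type*} {s : ℕ → G} {b m r r' : ℕ} {a a' : G}
    {u : List (Fin b)} (hmb : m.Coprime b) (hr : r < m) (hr' : r' < m)
    (hu : u ∈ carryLanguage s b m r a) (hu' : u ∈ carryLanguage s b m r' a') :
    r = r' ∧ a = a' := by
  obtain ⟨t, rfl, ht⟩ := hu
  obtain ⟨t', rfl, ht'⟩ := hu'
  have hcarry : b ^ u.length * r ≡ b ^ u.length * r' [MOD m] := by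
    apply Nat.ModEq.add_right_cancel' (valb b u)
    rw [ht, ht']
    simp [Nat.ModEq]
  obtain rfl : r = r' :=
    (hcarry.cancel_left_of_coprime (hmb.pow_right u.length)).eq_of_lt_of_lt hr hr'
  have hquot : t = t' := Nat.eq_of_mul_eq_mul_left (Nat.zero_lt_of_lt hr) (ht.symm.trans ht')
  exact ⟨rfl, congrArg s hquot⟩

theorem mul_mul_add_eq_mul_iff {m B q x t : ℕ} (hx : x < m * B) :
    m * (B * q) + x = m * t ↔ ∃ t' < B, t = B * q + t' ∧ x = m * t' := by
  have hm : 0 < m := Nat.pos_of_mul_pos_right (Nat.zero_lt_of_lt hx)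
  constructor
  · intro h
    obtain ⟨t', rfl⟩ : ∃ t', t = B * q + t' :=
      Nat.exists_eq_add_of_le (Nat.le_of_mul_le_mul_left (h ▸ Nat.le_add_right _ _) hm)
    have hxt : x = m * t' := by rwa [mul_add, Nat.add_left_cancel_iff] at h
    exact ⟨t', Nat.lt_of_mul_lt_mul_left (hxt ▸ hx), rfl, hxt⟩
  · rintro ⟨t', -, rfl, rfl⟩
    rw [mul_add]

section LeftQuotients

variable {G : Type*} [AddGroup G] {b m : ℕ} {s : ℕ → G}

theorem leftQuot_carryLanguage (hs : IsStronglyAdditive b s) (hb : 0 < b) {r r' q : ℕ}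
    (hr' : r' < m) {w : List (Fin b)} (hw : b ^ w.length * r + valb b w = m * q + r') (a : G) :
    leftQuot (carryLanguage s b m r a) w = carryLanguage s b m r' (-s q + a) := by
  ext u
  have hlt : b ^ u.length * r' + valb b u < m * b ^ u.length :=
    calc b ^ u.length * r' + valb b u
      _ < b ^ u.length * (r' + 1) := by rw [mul_add_one]; gcongr; exact valb_lt_pow_length b u
      _ ≤ m * b ^ u.length := by rw [mul_comm]; gcongr; exact hr'
  have hval : b ^ (w ++ u).length * r + valb b (w ++ u) =
      m * (b ^ u.length * q) + (b ^ u.length * r' + valb b u) :=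
    calc b ^ (w ++ u).length * r + valb b (w ++ u)
      _ = b ^ u.length * (b ^ w.length * r + valb b w) + valb b u := by
        rw [valb_append, List.length_append]; ring
      _ = _ := by rw [hw]; ring
  have hsum {t : ℕ} (ht : t < b ^ u.length) :
      s (b ^ u.length * q + t) = a ↔ s t = -s q + a := by
    rw [hs.pow hb _ _ _ ht, eq_neg_add_iff_add_eq]
  simp only [leftQuot, carryLanguage, Set.mem_ofPred_eq, hval, mul_mul_add_eq_mul_iff hlt]
  constructor
  · rintro ⟨_, hst, t, ht, rfl, hut⟩
    exact ⟨t, (hsum ht).mp hst, hut⟩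
  · rintro ⟨t, hst, hut⟩
    have ht : t < b ^ u.length := Nat.lt_of_mul_lt_mul_left (hut ▸ hlt)
    exact ⟨_, (hsum ht).mpr hst, t, ht, rfl, hut⟩

theorem carryLanguage_nonempty (hs : IsStronglyAdditive b s) (hsurj : Function.Surjective s)
    (hb : 1 < b) (hm : 0 < m) (r : ℕ) (a : G) : (carryLanguage s b m r a).Nonempty := by
  -- The quotient is sought as `b ^ x * c + x`: the leading block `c` places its product by `m` in
  -- the right interval whatever the trailing block `x < b ^ x`, which then adjusts `s`.
  obtain ⟨k, hk⟩ : ∃ k, 2 * m < b ^ k := pow_unbounded_of_one_lt _ hb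
  set c := b ^ k * r / m + 1 with hc
  obtain ⟨x, hx⟩ := hsurj (-s c + a)
  have hxb : x < b ^ x := Nat.lt_pow_self hb
  have hst : s (b ^ x * c + x) = a := by
    rw [hs.pow (Nat.zero_lt_of_lt hb) _ _ _ hxb, hx, add_neg_cancel_left]
  have hfloor : m * (b ^ k * r / m) ≤ b ^ k * r := Nat.mul_div_le _ _
  have hceil : b ^ k * r ≤ m * c := (Nat.lt_mul_div_succ _ hm).le
  have hlower : b ^ (k + x) * r ≤ m * (b ^ x * c + x) :=
    calc b ^ (k + x) * r = b ^ x * (b ^ k * r) := by ring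
      _ ≤ b ^ x * (m * c) := by gcongr
      _ ≤ m * (b ^ x * c + x) := by rw [mul_left_comm]; gcongr; exact Nat.le_add_right _ _
  have hupper : m * (b ^ x * c + x) < b ^ (k + x) * r + b ^ (k + x) :=
    calc m * (b ^ x * c + x) < m * (b ^ x * c + b ^ x) := by gcongr
      _ = b ^ x * (m * (b ^ k * r / m) + 2 * m) := by rw [hc]; ring
      _ ≤ b ^ x * (b ^ k * r + b ^ k) := by gcongr
      _ = b ^ (k + x) * r + b ^ (k + x) := by ring
  obtain ⟨u, hu, hv⟩ := exists_length_eq_and_valb_eq (Nat.sub_lt_left_of_lt_add hlower hupper)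
  exact ⟨u, _, hst, by rw [hu, hv, Nat.add_sub_cancel' hlower]⟩

theorem range_leftQuot_carryLanguage_zero (hs : IsStronglyAdditive b s)
    (hsurj : Function.Surjective s) (hb : 1 < b) (hm : 0 < m) (a : G) :
    Set.range (leftQuot (carryLanguage s b m 0 a)) =
      Set.range fun x : Fin m × G => carryLanguage s b m x.1 x.2 := by
  have hb₀ : 0 < b := Nat.zero_lt_of_lt hb
  apply Set.Subset.antisymm
  · rintro _ ⟨w, rfl⟩
    have hr : valb b w % m < m := Nat.mod_lt _ hm
    refine ⟨(⟨_, hr⟩, -s (valb b w / m) + a), (leftQuot_carryLanguage hs hb₀ hr ?_ a).symm⟩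
    rw [mul_zero, zero_add, Nat.div_add_mod]
  · rintro _ ⟨⟨r, c⟩, rfl⟩
    obtain ⟨q, hq⟩ := hsurj (a - c)
    obtain ⟨w, hw⟩ := valb_surjective hb (m * q + r)
    refine ⟨w, ?_⟩
    rw [leftQuot_carryLanguage hs hb₀ r.isLt (by rw [hw, mul_zero, zero_add]), hq, neg_sub,
      sub_add_cancel]

theorem carryLanguage_injective (hs : IsStronglyAdditive b s) (hsurj : Function.Surjective s)
    (hb : 1 < b) (hmb : m.Coprime b) :
    Function.Injective fun x : Fin m × G => carryLanguage s b m x.1 x.2 := by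
  rintro ⟨r, a⟩ ⟨r', a'⟩ (h : carryLanguage s b m r a = carryLanguage s b m r' a')
  obtain ⟨u, hu⟩ := carryLanguage_nonempty hs hsurj hb r.pos r a
  obtain ⟨hr, ha⟩ := eq_of_mem_carryLanguage hmb r.isLt r'.isLt hu (h ▸ hu)
  exact Prod.ext (Fin.ext hr) ha

theorem state_complexity_of_mT_odd_general (hs : IsStronglyAdditive b s)
    (hsurj : Function.Surjective s) (hb : 1 < b) (hmb : m.Coprime b) (a : G)
    (L : Set (List (Fin b))) (hL : L = {w | ∃ t, s t = a ∧ valb b w = m * t}) :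
    {Q | ∃ w : List (Fin b), Q = leftQuot L w}.encard = m * ENat.card G := by
  have hm : 0 < m := Nat.pos_of_ne_zero <| by
    rintro rfl
    exact hb.ne' ((Nat.coprime_zero_left b).mp hmb)
  calc {Q | ∃ w : List (Fin b), Q = leftQuot L w}.encard
    _ = (Set.range (leftQuot (carryLanguage s b m 0 a))).encard := by
      rw [hL, carryLanguage_zero]
      simp only [Set.range, eq_comm]
    _ = (Set.range fun x : Fin m × G => carryLanguage s b m x.1 x.2).encard := by
      rw [range_leftQuot_carryLanguage_zero hs hsurj hb hm]
    _ = ENat.card (Fin m × G) := by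
      rw [← Set.image_univ, (carryLanguage_injective hs hsurj hb hmb).encard_image,
        Set.encard_univ]
    _ = m * ENat.card G := by simp

end LeftQuotients

theorem state_complexity_of_mT_odd (p m : ℕ) (hp : 1 ≤ p) (hm : 1 ≤ m) (hmodd : Odd m)
    (L : Set (List (Fin (2 ^ p))))
    (hL : L = {w | ∃ t ∈ ThueMorse, valb (2 ^ p) w = m * t}) :
    {Q | ∃ w : List (Fin (2 ^ p)), Q = leftQuot L w}.ncard = 2 * m := by
  rw [Set.ncard_def, state_complexity_of_mT_odd_general (sTM_isStronglyAdditive.pow two_pos p)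
    sTM_surjective (Nat.one_lt_two_pow (by omega)) (hmodd.coprime_two_right.pow_right p) 0 L hL]
  simp [mul_comm]
end

section
/- Let p ≥ 1 and m = k·2^z with k odd. Let ℓ be an integer with 1 ≤ ℓ ≤ 2^z−1. Then for all n ∈ ℕ and all e < 2^{pn}: [m divides e and s(e/m) = 1] if and only if [m divides 2^{pn}·k·ℓ + e and s((2^{pn}·k·ℓ + e)/m) = 1 + s(ℓ)]. [This shows that in the projected automaton Π(A_{m,2^p} × A_{T,2^p}) the states (0, B) and (kℓ, B_ℓ) accept the same language.] -/
/-!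
Write `N = p * n`. Both sides force `k ∣ e`, say `e = k * f`; cancelling `k` leaves the case
`m = 2 ^ z` with `f` in place of `e`. Exact division by `2 ^ z` drops only zero digits, so it does
not change `sTM`, and `f < 2 ^ N` gives `sTM (2 ^ N * ℓ + f) = sTM ℓ + sTM f`. Both sides therefore
force `sTM f = 1`, hence `f ≠ 0`. If `z ≤ N`, then `2 ^ z` divides `2 ^ N * ℓ` and the divisibility
conditions agree; if `N < z`, both fail since `0 < f < 2 ^ N`.
-/

theorem count_digits_pow_mul_add {b d a x y : ℕ} (hb : 1 < b) (hd : d ≠ 0) (hy : y < b ^ a) :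
    (Nat.digits b (b ^ a * x + y)).count d =
      (Nat.digits b x).count d + (Nat.digits b y).count d := by
  rcases Nat.eq_zero_or_pos x with rfl | hx
  · simp
  · have hlen : (Nat.digits b y).length ≤ a := (Nat.digits_length_le_iff hb y).2 hy
    have happend := Nat.digits_append_zeroes_append_digits
      (k := a - (Nat.digits b y).length) (n := y) hb hx
    rw [Nat.add_sub_cancel' hlen, add_comm y] at happend
    rw [← happend]
    simp [List.count_replicate, hd.symm, add_comm]

theorem pow_dvd_pow_mul_add_iff {b N f : ℕ} (z x : ℕ) (hf : f ≠ 0) (hfN : f < b ^ N) :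
    b ^ z ∣ b ^ N * x + f ↔ b ^ z ∣ f := by
  rcases le_total z N with hzN | hNz
  · exact Nat.dvd_add_right ((pow_dvd_pow b hzN).mul_right x)
  · have hndvd : ¬ b ^ N ∣ f := Nat.not_dvd_of_pos_of_lt (Nat.pos_of_ne_zero hf) hfN
    have hpow : b ^ N ∣ b ^ z := pow_dvd_pow b hNz
    exact iff_of_false
      (fun h ↦ hndvd ((Nat.dvd_add_right (dvd_mul_right _ x)).1 (hpow.trans h)))
      (fun h ↦ hndvd (hpow.trans h))

theorem sTM_zero : sTM 0 = 0 := by simp [sTM]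

theorem sTM_two_pow_mul_add {a y : ℕ} (x : ℕ) (hy : y < 2 ^ a) :
    sTM (2 ^ a * x + y) = sTM x + sTM y := by
  simp only [sTM, count_digits_pow_mul_add one_lt_two one_ne_zero hy, Nat.cast_add]

theorem sTM_two_pow_mul (a x : ℕ) : sTM (2 ^ a * x) = sTM x := by
  simpa [sTM_zero] using sTM_two_pow_mul_add x (Nat.two_pow_pos a)

theorem sTM_div_two_pow {z n : ℕ} (h : 2 ^ z ∣ n) : sTM (n / 2 ^ z) = sTM n := by
  rw [← sTM_two_pow_mul z, Nat.mul_div_cancel' h]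

theorem mul_two_pow_dvd_and_sTM_div_iff {k : ℕ} (hk : 0 < k) (z n : ℕ) (x : ZMod 2) :
    (k * 2 ^ z ∣ k * n ∧ sTM (k * n / (k * 2 ^ z)) = x) ↔ (2 ^ z ∣ n ∧ sTM n = x) := by
  rw [Nat.mul_dvd_mul_iff_left hk, Nat.mul_div_mul_left _ _ hk]
  exact and_congr_right fun h ↦ by rw [sTM_div_two_pow h]

theorem two_pow_dvd_and_sTM_eq_one_iff {N f : ℕ} (z ℓ : ℕ) (hf : f < 2 ^ N) :
    (2 ^ z ∣ f ∧ sTM f = 1) ↔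
      (2 ^ z ∣ 2 ^ N * ℓ + f ∧ sTM (2 ^ N * ℓ + f) = 1 + sTM ℓ) := by
  rw [sTM_two_pow_mul_add ℓ hf, add_comm (sTM ℓ), add_left_inj]
  refine and_congr_left fun hs ↦ (pow_dvd_pow_mul_add_iff z ℓ ?_ hf).symm
  rintro rfl
  exact zero_ne_one (sTM_zero.symm.trans hs)

theorem class_0B_indistinguishable_general {k N e : ℕ} (hk : 0 < k) (z ℓ : ℕ) (he : e < 2 ^ N) :
    (k * 2 ^ z ∣ e ∧ sTM (e / (k * 2 ^ z)) = 1) ↔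
      (k * 2 ^ z ∣ 2 ^ N * (k * ℓ) + e ∧
        sTM ((2 ^ N * (k * ℓ) + e) / (k * 2 ^ z)) = 1 + sTM ℓ) := by
  by_cases hke : k ∣ e
  · obtain ⟨f, rfl⟩ := hke
    have hf : f < 2 ^ N := (Nat.le_mul_of_pos_left f hk).trans_lt he
    have hfactor : 2 ^ N * (k * ℓ) + k * f = k * (2 ^ N * ℓ + f) := by ring
    rw [hfactor, mul_two_pow_dvd_and_sTM_div_iff hk, mul_two_pow_dvd_and_sTM_div_iff hk]
    exact two_pow_dvd_and_sTM_eq_one_iff z ℓ hf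
  · have hk_dvd : k ∣ 2 ^ N * (k * ℓ) := (dvd_mul_right k ℓ).mul_left _
    exact iff_of_false
      (fun h ↦ hke (dvd_of_mul_right_dvd h.1))
      (fun h ↦ hke ((Nat.dvd_add_right hk_dvd).1 (dvd_of_mul_right_dvd h.1)))

theorem class_0B_indistinguishable (p m k z : ℕ) (hp : 1 ≤ p) (hkodd : Odd k)
    (hm : m = k * 2 ^ z)
    (ℓ : ℕ) (hℓ1 : 1 ≤ ℓ) (hℓ2 : ℓ ≤ 2 ^ z - 1) :
    ∀ n e : ℕ, e < 2 ^ (p * n) →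
      ((m ∣ e ∧ sTM (e / m) = 1) ↔
       (m ∣ 2 ^ (p * n) * (k * ℓ) + e ∧
         sTM ((2 ^ (p * n) * (k * ℓ) + e) / m) = 1 + sTM ℓ)) := by
  subst hm
  exact fun _ _ he ↦ class_0B_indistinguishable_general hkodd.pos z ℓ he
end

section
/- Let p ≥ 1 and m = k·2^z with k odd and z ≥ 1. Let α ∈ [0, z−1] and ℓ ∈ [1, 2^α − 1]. Then for all n ∈ ℕ and all e < 2^{pn}: [m divides 2^{pn}·k·2^{z−α−1} + e and s((2^{pn}·k·2^{z−α−1} + e)/m) = 1] if and only if [m divides 2^{pn}·(k·2^{z−α−1} + k·2^{z−α}·ℓ) + e and s((2^{pn}·(k·2^{z−α−1} + k·2^{z−α}·ℓ) + e)/m) = 1 + s(ℓ)]. [This shows that all states of the pre-class C_α of the projected automaton accept the same language.] -/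
/-- Acceptance from the state `(i, x)` of the projected product automaton. A word of length `n` over
`{0, …, 2 ^ p - 1}` enters only through its number of bits `N = p * n` and its value `e`. -/
def AcceptsFrom (m N e i : ℕ) (x : ZMod 2) : Prop :=
  m ∣ 2 ^ N * i + e ∧ sTM ((2 ^ N * i + e) / m) = x

theorem count_digits_add_pow_mul {b d j a : ℕ} (hb : 1 < b) (hd : d ≠ 0) (ha : a < b ^ j) (l : ℕ) :
    (b.digits (a + b ^ j * l)).count d = (b.digits a).count d + (b.digits l).count d := by
  rcases l.eq_zero_or_pos with rfl | hl
  · simp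
  · have hlen : (b.digits a).length ≤ j := (Nat.digits_length_le_iff hb a).2 ha
    rw [← Nat.add_sub_cancel' hlen, ← Nat.digits_append_zeroes_append_digits hb hl]
    simp [List.count_replicate, hd.symm]

theorem sTM_add_two_pow_mul {j a : ℕ} (ha : a < 2 ^ j) (l : ℕ) :
    sTM (a + 2 ^ j * l) = sTM a + sTM l := by
  simp only [sTM, count_digits_add_pow_mul one_lt_two one_ne_zero ha, Nat.cast_add]

theorem acceptsFrom_iff_acceptsFrom_add {m N e i d j ℓ : ℕ} (hi : 2 ^ N * i + e < 2 ^ j * m)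
    (hd : 2 ^ N * d = m * (2 ^ j * ℓ)) (x : ZMod 2) :
    AcceptsFrom m N e i x ↔ AcceptsFrom m N e (i + d) (x + sTM ℓ) := by
  have hm : 0 < m := Nat.pos_of_mul_pos_left (Nat.zero_lt_of_lt hi)
  have hshift : 2 ^ N * (i + d) + e = 2 ^ N * i + e + m * (2 ^ j * ℓ) := by rw [← hd]; ring
  have hquot : (2 ^ N * i + e) / m < 2 ^ j := (Nat.div_lt_iff_lt_mul hm).2 hi
  rw [AcceptsFrom, AcceptsFrom, hshift, Nat.dvd_add_left (dvd_mul_right _ _),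
    Nat.add_mul_div_left _ _ hm, sTM_add_two_pow_mul hquot, add_left_inj]

theorem not_dvd_mul_odd_add {m q c t e : ℕ} (hc : c ≠ 0) (ht : Odd t) (he : e < q)
    (hm : q * c * 2 ∣ m) : ¬ m ∣ q * (c * t) + e := by
  intro h
  have hqm : q ∣ m := (Dvd.intro _ (mul_assoc q c 2).symm).trans hm
  have hqe : q ∣ e := (Nat.dvd_add_right (dvd_mul_right _ _)).1 (hqm.trans h)
  obtain rfl : e = 0 := Nat.eq_zero_of_dvd_of_lt hqe he
  have hdvd : q * c * 2 ∣ q * c * t := by simpa only [add_zero, mul_assoc] using hm.trans h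
  exact ht.not_two_dvd_nat (Nat.dvd_of_mul_dvd_mul_left (by positivity) hdvd)

theorem preclass_indistinguishable_general {k z α N e : ℕ} (hk : k ≠ 0) (hα : α < z)
    (he : e < 2 ^ N) (ℓ : ℕ) (x : ZMod 2) :
    AcceptsFrom (k * 2 ^ z) N e (k * 2 ^ (z - α - 1)) x ↔
      AcceptsFrom (k * 2 ^ z) N e (k * 2 ^ (z - α - 1) + k * 2 ^ (z - α) * ℓ) (x + sTM ℓ) := by
  obtain ⟨b, rfl⟩ : ∃ b, z = α + 1 + b := Nat.exists_eq_add_of_le hα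
  rw [show α + 1 + b - α - 1 = b by omega, show α + 1 + b - α = b + 1 by omega]
  have hc : 0 < k * 2 ^ b := by positivity
  rcases le_or_gt α N with hN | hN
  · obtain ⟨j, rfl⟩ := Nat.exists_eq_add_of_le hN
    refine acceptsFrom_iff_acceptsFrom_add (j := j) ?_ (by ring) x
    calc 2 ^ (α + j) * (k * 2 ^ b) + e
        < 2 ^ (α + j) * (k * 2 ^ b) + 2 ^ (α + j) * (k * 2 ^ b) := by
          gcongr; exact he.trans_le (Nat.le_mul_of_pos_right _ hc)
      _ = 2 ^ j * (k * 2 ^ (α + 1 + b)) := by ring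
  · obtain ⟨r, rfl⟩ := Nat.exists_eq_add_of_lt hN
    have hm : 2 ^ N * (k * 2 ^ b) * 2 ∣ k * 2 ^ (N + r + 1 + 1 + b) := ⟨2 ^ (r + 1), by ring⟩
    have hfirst := not_dvd_mul_odd_add hc.ne' odd_one he hm
    have hsecond := not_dvd_mul_odd_add hc.ne' (odd_two_mul_add_one ℓ) he hm
    rw [mul_one] at hfirst
    rw [show k * 2 ^ b * (2 * ℓ + 1) = k * 2 ^ b + k * 2 ^ (b + 1) * ℓ by ring] at hsecond
    exact iff_of_false (fun h => hfirst h.1) (fun h => hsecond h.1)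

theorem preclass_indistinguishable (p m k z : ℕ) (hp : 1 ≤ p) (hkodd : Odd k) (hz : 1 ≤ z)
    (hm : m = k * 2 ^ z)
    (α : ℕ) (hα : α ≤ z - 1) (ℓ : ℕ) (hℓ1 : 1 ≤ ℓ) (hℓ2 : ℓ ≤ 2 ^ α - 1) :
    ∀ n e : ℕ, e < 2 ^ (p * n) →
      ((m ∣ 2 ^ (p * n) * (k * 2 ^ (z - α - 1)) + e ∧
          sTM ((2 ^ (p * n) * (k * 2 ^ (z - α - 1)) + e) / m) = 1) ↔
       (m ∣ 2 ^ (p * n) * (k * 2 ^ (z - α - 1) + k * 2 ^ (z - α) * ℓ) + e ∧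
          sTM ((2 ^ (p * n) * (k * 2 ^ (z - α - 1) + k * 2 ^ (z - α) * ℓ) + e) / m)
              = 1 + sTM ℓ)) := by
  subst hm
  exact fun n e he => preclass_indistinguishable_general hkodd.pos.ne' (by omega) he ℓ 1
end
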